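/- arXiv:math/0602554 — 6 statements merged into one kernel-verified Lean document; each statement's English description precedes it below -/
import Mathlib

section
/- Let O be a Dedekind domain which is not a field, with field of fractions K, and let 𝔞 be a nonzero ideal of O, regarded as an O-submodule of K. For each maximal ideal v of O let K_v denote the v-adic completion of K, O_v ⊆ K_v its valuation ring, and 𝔞_v the O_v-submodule of K_v generated by the image of 𝔞. Then: (i) for every x ∈ K, the image of x in K_v lies in 𝔞_v for all but finitely many v; and (ii) the map K⧸𝔞 → ⊕_v (K_v⧸𝔞_v) induced by the diagonal embedding K → ∏_v K_v is an isomorphism of O-modules onto the direct sum. -/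
open IsDedekindDomain DirectSum

/-!
Everything is read off from a valuation criterion: `y ∈ K_v` lies in `𝔞_v` if and only if
`v y ≤ v a` for some `a ∈ 𝔞` (`mem_span_image_iff`).  Finiteness in (i) then follows by fixing a
nonzero `a ∈ 𝔞`: the places where `x ∉ 𝔞_v` are among the finitely many poles of `x / a`.

Injectivity is the local-global principle `mem_map_of_forall_valuation_le`: if `x` is locally in
`𝔞` everywhere, then for each `v` some `d ∉ v` satisfies `d x ∈ 𝔞`, so the ideal of all `d` with
`d x ∈ 𝔞` lies in no maximal ideal.

For surjectivity it is enough to hit a class supported at a single `v`, and density of `K` in `K_v`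
reduces to the class of some `k ∈ K`.  The nonzero ideal `{r | r k ∈ 𝔞}` has the form `v ^ n J` with
`v ∤ J`; writing `1 = s + t` with `s ∈ v ^ n` and `t ∈ J`, the element `t k` is congruent to `k`
modulo `𝔞_v`, and lies in `𝔞_w` for each `w ≠ v` (`exists_approx_of_global`).
-/

section Helpers

variable {O : Type*} [CommRing O] [IsDedekindDomain O] {K : Type*} [Field K] [Algebra O K]
  [IsFractionRing O K]

lemma valued_algebraMap (v : HeightOneSpectrum O) (x : K) :
    Valued.v (algebraMap K (v.adicCompletion K) x) = v.valuation K x :=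
  HeightOneSpectrum.valuedAdicCompletion_eq_valuation' v x

/-- Valuation criterion for membership in `𝔞_v`. -/
lemma mem_span_image_iff (𝔞 : Ideal O) (v : HeightOneSpectrum O) (y : v.adicCompletion K) :
    y ∈ Submodule.span (v.adicCompletionIntegers K)
        ((fun a : O => algebraMap K (v.adicCompletion K) (algebraMap O K a)) '' (𝔞 : Set O)) ↔
      ∃ a ∈ 𝔞, Valued.v y ≤ v.valuation K (algebraMap O K a) := by
  constructor
  · intro hy
    induction hy using Submodule.span_induction with
    | mem z hz =>
      obtain ⟨a, ha, rfl⟩ := hz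
      exact ⟨a, ha, (valued_algebraMap v _).le⟩
    | zero => exact ⟨0, 𝔞.zero_mem, by simp⟩
    | add z w _ _ hz hw =>
      obtain ⟨a, ha, hza⟩ := hz
      obtain ⟨b, hb, hwb⟩ := hw
      rcases le_total (Valued.v z) (Valued.v w) with h | h
      · exact ⟨b, hb, (Valued.v.map_add z w).trans (by rw [max_eq_right h]; exact hwb)⟩
      · exact ⟨a, ha, (Valued.v.map_add z w).trans (by rw [max_eq_left h]; exact hza)⟩
    | smul r z _ hz =>
      obtain ⟨a, ha, hza⟩ := hz
      refine ⟨a, ha, le_trans ?_ hza⟩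
      have h1 : Valued.v (r : v.adicCompletion K) ≤ 1 := r.2
      change Valued.v ((r : v.adicCompletion K) * z) ≤ _
      rw [map_mul]
      exact mul_le_of_le_one_left' h1
  · rintro ⟨a, ha, hya⟩
    rw [← valued_algebraMap] at hya
    set b := algebraMap K (v.adicCompletion K) (algebraMap O K a) with hb
    rcases eq_or_ne b 0 with h0 | h0
    · rw [h0, map_zero, le_zero_iff, map_eq_zero] at hya
      rw [hya]
      exact Submodule.zero_mem _
    · have hint : Valued.v (y / b) ≤ 1 := by
        rw [map_div₀]
        exact div_le_one_of_le₀ hya zero_le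
      have hyb : y = (⟨y / b, hint⟩ : v.adicCompletionIntegers K) • b :=
        (div_mul_cancel₀ y h0).symm
      rw [hyb]
      exact Submodule.smul_mem _ _ (Submodule.subset_span ⟨a, ha, rfl⟩)

/-- An element whose valuation at `v` is bounded by that of an element of `𝔞` is multiplied into
`𝔞` by some denominator prime to `v`. -/
lemma exists_notMem_mul_mem (𝔞 : Ideal O) (v : HeightOneSpectrum O) (x : K)
    (h : ∃ a ∈ 𝔞, v.valuation K x ≤ v.valuation K (algebraMap O K a)) :
    ∃ d : O, d ∉ v.asIdeal ∧ ∃ b ∈ 𝔞, algebraMap O K b = algebraMap O K d * x := by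
  obtain ⟨a, ha, hxa⟩ := h
  rcases eq_or_ne (algebraMap O K a) 0 with h0 | h0
  · rw [h0, map_zero, le_zero_iff, map_eq_zero] at hxa
    exact ⟨1, fun h1 => v.isPrime.ne_top ((Ideal.eq_top_iff_one _).2 h1), 0, 𝔞.zero_mem,
      by simp [hxa]⟩
  · have hint : v.valuation K (x / algebraMap O K a) ≤ 1 := by
      rw [map_div₀]
      exact div_le_one_of_le₀ hxa zero_le
    obtain ⟨n, d, hnd⟩ := v.exists_primeCompl_mul_eq_of_integer _ hint
    refine ⟨d, d.2, n * a, 𝔞.mul_mem_left _ ha, ?_⟩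
    rw [map_mul, ← hnd]
    field_simp

/-- Conversely, a denominator prime to `v` bounds the valuation. -/
lemma exists_valuation_le (𝔞 : Ideal O) (v : HeightOneSpectrum O) (x : K) (d : O)
    (hd : d ∉ v.asIdeal) (h : ∃ b ∈ 𝔞, algebraMap O K b = algebraMap O K d * x) :
    ∃ a ∈ 𝔞, v.valuation K x ≤ v.valuation K (algebraMap O K a) := by
  obtain ⟨b, hb, hbx⟩ := h
  refine ⟨b, hb, ?_⟩
  rw [hbx, map_mul, (v.valuation_eq_one_iff_notMem (K := K)).2 hd, one_mul]

/-- The ideal of all `r` with `r x ∈ 𝔞`. -/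
def denomIdeal (𝔞 : Ideal O) (x : K) : Ideal O :=
  (Submodule.map (Algebra.linearMap O K) 𝔞).comap (LinearMap.toSpanSingleton O K x)

omit [IsDedekindDomain O] [IsFractionRing O K] in
lemma mem_denomIdeal {𝔞 : Ideal O} {x : K} {r : O} :
    r ∈ denomIdeal 𝔞 x ↔ ∃ b ∈ 𝔞, algebraMap O K b = algebraMap O K r * x := by
  simp [denomIdeal, Algebra.smul_def]

lemma denomIdeal_ne_bot {𝔞 : Ideal O} (h𝔞 : 𝔞 ≠ 0) (x : K) : denomIdeal 𝔞 x ≠ ⊥ := by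
  obtain ⟨a, ha, ha0⟩ := Submodule.exists_mem_ne_zero_of_ne_bot h𝔞
  obtain ⟨n, d, hd, rfl⟩ := IsFractionRing.div_surjective (A := O) x
  have hd0 : algebraMap O K d ≠ 0 := IsFractionRing.to_map_ne_zero_of_mem_nonZeroDivisors hd
  intro hbot
  have hmem : a * d ∈ denomIdeal 𝔞 (algebraMap O K n / algebraMap O K d) :=
    mem_denomIdeal.2 ⟨a * n, 𝔞.mul_mem_right _ ha, by simp only [map_mul]; field_simp⟩
  rw [hbot, Submodule.mem_bot] at hmem
  exact mul_ne_zero ha0 (nonZeroDivisors.ne_zero hd) hmem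

/-- Local-global principle: an element of `K` that lies in `𝔞` at every place lies in `𝔞`. -/
lemma mem_map_of_forall_valuation_le (hO : ¬IsField O) (𝔞 : Ideal O) (x : K)
    (h : ∀ v : HeightOneSpectrum O,
      ∃ a ∈ 𝔞, v.valuation K x ≤ v.valuation K (algebraMap O K a)) :
    x ∈ Submodule.map (Algebra.linearMap O K) 𝔞 := by
  have htop : denomIdeal 𝔞 x = ⊤ := by
    by_contra hne
    obtain ⟨M, hM, hle⟩ := Ideal.exists_le_maximal _ hne
    let v : HeightOneSpectrum O :=
      ⟨M, hM.isPrime, Ring.ne_bot_of_isMaximal_of_not_isField hM hO⟩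
    obtain ⟨d, hd, hdx⟩ := exists_notMem_mul_mem 𝔞 v x (h v)
    exact hd (hle (mem_denomIdeal.2 hdx))
  obtain ⟨b, hb, hbx⟩ := mem_denomIdeal.1 ((Ideal.eq_top_iff_one _).1 htop)
  exact ⟨b, hb, by simpa using hbx⟩

/-- Chinese remainder step: an element of `K` may be replaced by one congruent to it modulo `𝔞`
at `v` and lying in `𝔞` at every other place. -/
lemma exists_approx_of_global {𝔞 : Ideal O} (h𝔞 : 𝔞 ≠ 0) (v : HeightOneSpectrum O) (k : K) :
    ∃ x : K, (∃ a ∈ 𝔞, v.valuation K (x - k) ≤ v.valuation K (algebraMap O K a)) ∧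
      ∀ w : HeightOneSpectrum O, w ≠ v →
        ∃ a ∈ 𝔞, w.valuation K x ≤ w.valuation K (algebraMap O K a) := by
  have hfin : FiniteMultiplicity v.asIdeal (denomIdeal 𝔞 k) :=
    FiniteMultiplicity.of_prime_left v.prime (denomIdeal_ne_bot h𝔞 k)
  obtain ⟨J, hJ, hvJ⟩ := hfin.exists_eq_pow_mul_and_not_dvd
  set n := multiplicity v.asIdeal (denomIdeal 𝔞 k)
  rw [Ideal.dvd_iff_le] at hvJ
  have hmem : ∀ s ∈ v.asIdeal ^ n, ∀ t ∈ J, s * t ∈ denomIdeal 𝔞 k := fun s hs t ht => by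
    rw [hJ]
    exact Ideal.mul_mem_mul hs ht
  obtain ⟨j, hj, hjv⟩ := SetLike.not_le_iff_exists.1 hvJ
  have hcop : v.asIdeal ^ n ⊔ J = ⊤ := by
    refine Ideal.isCoprime_iff_sup_eq.1 (IsCoprime.pow_left (Ideal.isCoprime_iff_sup_eq.2 ?_))
    exact v.isMaximal.1.2 _ (left_lt_sup.2 hvJ)
  obtain ⟨s, hs, t, ht, hst⟩ := Submodule.mem_sup.1 ((Ideal.eq_top_iff_one _).1 hcop)
  have hstK : algebraMap O K s + algebraMap O K t = 1 := by rw [← map_add, hst, map_one]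
  refine ⟨algebraMap O K t * k, ?_, fun w hw => ?_⟩
  · -- The difference is `-s k`, which `j ∈ J \ v` multiplies into `𝔞`.
    obtain ⟨b, hb, hbk⟩ := mem_denomIdeal.1 (hmem s hs j hj)
    refine exists_valuation_le 𝔞 v _ j hjv ⟨-b, 𝔞.neg_mem hb, ?_⟩
    rw [map_neg, hbk, map_mul]
    linear_combination (-algebraMap O K j * k) * hstK
  · -- An element of `v ^ n` outside `w` multiplies `t k` into `𝔞`.
    have hnle : ¬ v.asIdeal ^ n ≤ w.asIdeal := fun hle =>
      hw (HeightOneSpectrum.ext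
        (v.isMaximal.eq_of_le w.isPrime.ne_top (w.isPrime.le_of_pow_le hle)).symm)
    obtain ⟨e, he, hew⟩ := SetLike.not_le_iff_exists.1 hnle
    obtain ⟨b, hb, hbk⟩ := mem_denomIdeal.1 (hmem e he t ht)
    exact exists_valuation_le 𝔞 w _ e hew ⟨b, hb, by rw [hbk, map_mul, mul_assoc]⟩

/-- Density of `K` in `K_v`, modulo `𝔞_v`. -/
lemma exists_global_approx {𝔞 : Ideal O} (h𝔞 : 𝔞 ≠ 0) (v : HeightOneSpectrum O)
    (y : v.adicCompletion K) :
    ∃ k : K, ∃ a ∈ 𝔞,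
      Valued.v (algebraMap K (v.adicCompletion K) k - y) ≤ v.valuation K (algebraMap O K a) := by
  obtain ⟨a, ha, ha0⟩ := Submodule.exists_mem_ne_zero_of_ne_bot h𝔞
  have haK : algebraMap O K a ≠ 0 := by simpa using ha0
  set b := algebraMap K (v.adicCompletion K) (algebraMap O K a) with hb
  have hb0 : b ≠ 0 := by simpa [hb] using ha0
  -- Rescaling by `b` turns the required neighbourhood into a translate of the open subring `O_v`.
  have hopen : IsOpen {z : v.adicCompletion K | z - y / b ∈ v.adicCompletionIntegers K} :=
    (Valued.isOpen_valuationSubring (v.adicCompletion K)).preimage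
      (continuous_id.sub continuous_const)
  obtain ⟨k, hk⟩ := (HeightOneSpectrum.denseRange_algebraMap K v).exists_mem_open hopen
    ⟨y / b, by simp [zero_mem]⟩
  have hk' : Valued.v (algebraMap K (v.adicCompletion K) k - y / b) ≤ 1 := hk
  refine ⟨k * algebraMap O K a, a, ha, ?_⟩
  have heq : algebraMap K (v.adicCompletion K) (k * algebraMap O K a) - y =
      (algebraMap K (v.adicCompletion K) k - y / b) * b := by
    rw [map_mul, sub_mul, div_mul_cancel₀ y hb0]
  rw [heq, map_mul, ← valued_algebraMap]
  exact mul_le_of_le_one_left' hk'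

/-- Linear maps `M → N i` that are pointwise finitely supported induce an isomorphism from `M ⧸ A`
onto `⨁ i, N i` as soon as `A` is their common kernel and every element of a single summand is
hit. -/
lemma exists_quotient_equiv_directSum {R M ι : Type*} [CommRing R] [AddCommGroup M] [Module R M]
    {N : ι → Type*} [∀ i, AddCommGroup (N i)] [∀ i, Module R (N i)] (φ : ∀ i, M →ₗ[R] N i)
    (A : Submodule R M) (hfin : ∀ x, {i | φ i x ≠ 0}.Finite)
    (hker : ∀ x, x ∈ A ↔ ∀ i, φ i x = 0)
    (hsurj : ∀ i (q : N i), ∃ x, φ i x = q ∧ ∀ j, j ≠ i → φ j x = 0) :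
    ∃ e : (M ⧸ A) ≃ₗ[R] ⨁ i, N i, ∀ x i, e (Submodule.Quotient.mk x) i = φ i x := by
  classical
  have hex : ∀ x : M, ∃ f : ⨁ i, N i, ∀ i, f i = φ i x := fun x => by
    refine ⟨DFinsupp.mk (hfin x).toFinset fun i => φ i x, fun i => ?_⟩
    refine DFinsupp.mk_apply.trans ?_
    split_ifs with hi
    · rfl
    · exact (by simpa using hi : φ i x = 0).symm
  choose F hF using hex
  let L : M →ₗ[R] ⨁ i, N i :=
    { toFun := F
      map_add' := fun x y => DFinsupp.ext fun i => by
        rw [DFinsupp.add_apply, hF, hF, hF, map_add]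
      map_smul' := fun r x => DFinsupp.ext fun i => by
        rw [DFinsupp.smul_apply, hF, hF, map_smul, RingHom.id_apply] }
  have hL : ∀ x i, L x i = φ i x := hF
  have hkerL : LinearMap.ker L = A := by
    ext x
    rw [LinearMap.mem_ker, hker]
    refine ⟨fun hx i => ?_, fun hx => DFinsupp.ext fun i => (hL x i).trans (hx i)⟩
    rw [← hL, hx]
    rfl
  have hrange : LinearMap.range L = ⊤ := by
    rw [eq_top_iff]
    rintro f -
    induction f using DirectSum.induction_on with
    | zero => exact Submodule.zero_mem _
    | add f g hf hg => exact Submodule.add_mem _ hf hg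
    | of i q =>
      obtain ⟨x, hx, hx'⟩ := hsurj i q
      refine ⟨x, DFinsupp.ext fun j => (hL x j).trans ?_⟩
      rcases eq_or_ne j i with rfl | hj
      · rw [hx, DirectSum.of_eq_same]
      · rw [hx' j hj, DirectSum.of_eq_of_ne _ _ _ hj]
  exact ⟨(Submodule.quotEquivOfEq _ _ hkerL.symm).trans
    (L.quotKerEquivOfSurjective (LinearMap.range_eq_top.1 hrange)), hL⟩

end Helpers

/-- Lemma 3.6.3 of the paper.
Let `O` be a Dedekind domain which is not a field, with fraction field `K`, and let `𝔞` be a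
nonzero ideal of `O`, regarded as the `O`-submodule `A` of `K`.  For each maximal ideal `v` of
`O` (i.e. each point of the height-one spectrum), let `K_v` be the `v`-adic completion of `K`,
`O_v ⊆ K_v` its valuation ring, and `𝔞_v = Av v` the `O_v`-submodule of `K_v` generated by the
image of `𝔞` (regarded below, via its carrier set, as an `O`-submodule of `K_v`).  Then:
(i) for every `x ∈ K` the image of `x` in `K_v` lies in `𝔞_v` for all but finitely many `v`;
(ii) the map `K⧸𝔞 → ⊕_v K_v⧸𝔞_v` induced by the diagonal embedding is an isomorphism of
`O`-modules onto the direct sum. -/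
theorem stmt_2 (O : Type*) [CommRing O] [IsDedekindDomain O] (hO : ¬IsField O)
    (K : Type*) [Field K] [Algebra O K] [IsFractionRing O K]
    (𝔞 : Ideal O) (h𝔞 : 𝔞 ≠ 0)
    (A : Submodule O K) (hA : A = Submodule.map (Algebra.linearMap O K) 𝔞)
    (Av : (v : HeightOneSpectrum O) → Submodule O (v.adicCompletion K))
    (hAv : ∀ v : HeightOneSpectrum O, (Av v : Set (v.adicCompletion K)) =
      (Submodule.span (v.adicCompletionIntegers K)
        ((fun a : O => algebraMap K (v.adicCompletion K) (algebraMap O K a)) '' (𝔞 : Set O)) :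
          Submodule (v.adicCompletionIntegers K) (v.adicCompletion K))) :
    (∀ x : K, {v : HeightOneSpectrum O |
        algebraMap K (v.adicCompletion K) x ∉ Av v}.Finite) ∧
    ∃ e : (K ⧸ A) ≃ₗ[O] ⨁ (v : HeightOneSpectrum O), (v.adicCompletion K ⧸ Av v),
      ∀ (x : K) (v : HeightOneSpectrum O),
        e (Submodule.Quotient.mk x) v =
          Submodule.Quotient.mk (algebraMap K (v.adicCompletion K) x) := by
  subst hA
  have hmem : ∀ (v : HeightOneSpectrum O) (y : v.adicCompletion K),
      y ∈ Av v ↔ ∃ a ∈ 𝔞, Valued.v y ≤ v.valuation K (algebraMap O K a) := fun v y => by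
    rw [← mem_span_image_iff, ← SetLike.mem_coe, hAv v, SetLike.mem_coe]
  have hmemK : ∀ (v : HeightOneSpectrum O) (x : K), algebraMap K (v.adicCompletion K) x ∈ Av v ↔
      ∃ a ∈ 𝔞, v.valuation K x ≤ v.valuation K (algebraMap O K a) := fun v x => by
    rw [hmem, valued_algebraMap]
  have hfin : ∀ x : K, {v : HeightOneSpectrum O |
      algebraMap K (v.adicCompletion K) x ∉ Av v}.Finite := fun x => by
    obtain ⟨a, ha, ha0⟩ := Submodule.exists_mem_ne_zero_of_ne_bot h𝔞
    have haK : algebraMap O K a ≠ 0 := by simpa using ha0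
    refine (HeightOneSpectrum.Support.finite O (x / algebraMap O K a)).subset fun v hv => ?_
    change 1 < v.valuation K (x / algebraMap O K a)
    by_contra hle
    refine hv ((hmemK v x).2 ⟨a, ha, ?_⟩)
    rw [not_lt, map_div₀] at hle
    exact (div_le_one₀ (zero_lt_iff.2 ((Valuation.ne_zero_iff _).2 haK))).1 hle
  refine ⟨hfin, ?_⟩
  let φ : ∀ v : HeightOneSpectrum O, K →ₗ[O] (v.adicCompletion K ⧸ Av v) := fun v =>
    (Av v).mkQ.comp (IsScalarTower.toAlgHom O K (v.adicCompletion K)).toLinearMap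
  have hφ : ∀ v x, φ v x = Submodule.Quotient.mk (algebraMap K (v.adicCompletion K) x) :=
    fun _ _ => rfl
  have hφ0 : ∀ v x, φ v x = 0 ↔
      ∃ a ∈ 𝔞, v.valuation K x ≤ v.valuation K (algebraMap O K a) := fun v x => by
    rw [hφ, Submodule.Quotient.mk_eq_zero, hmemK]
  refine exists_quotient_equiv_directSum φ _ (fun x => ?_) (fun x => ⟨?_, fun hx => ?_⟩)
    fun v q => ?_
  · refine (hfin x).subset fun v hv => ?_
    exact fun hx => hv ((Submodule.Quotient.mk_eq_zero _).2 hx)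
  · rintro ⟨a, ha, rfl⟩ v
    exact (hφ0 v _).2 ⟨a, ha, le_rfl⟩
  · exact mem_map_of_forall_valuation_le hO 𝔞 x fun v => (hφ0 v x).1 (hx v)
  · obtain ⟨y, rfl⟩ := Submodule.Quotient.mk_surjective _ q
    obtain ⟨k, hk⟩ := exists_global_approx h𝔞 v y
    obtain ⟨x, hxv, hxw⟩ := exists_approx_of_global h𝔞 v k
    refine ⟨x, ?_, fun w hw => (hφ0 w x).2 (hxw w hw)⟩
    rw [hφ, Submodule.Quotient.eq]
    have h1 := (hmemK v _).2 hxv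
    have h2 := (hmem v _).2 hk
    rw [map_sub] at h1
    simpa only [sub_add_sub_cancel] using Submodule.add_mem _ h1 h2
end

section
/- Let p be a prime number and let O be a Dedekind domain of characteristic p which is not a field, such that the residue field O⧸𝔭 is finite for every maximal ideal 𝔭 of O; let K be the field of fractions of O. Then for every nonzero ideal 𝔞 of O, regarded as an O-submodule of K, there exists a group homomorphism χ : (K⧸𝔞, +) → ℂˣ such that for every maximal ideal 𝔭 of O, the restriction of χ to the subgroup (𝔭⁻¹·𝔞)⧸𝔞 of K⧸𝔞 is non-trivial. -/
/-!
Since `p • x = 0` on `K ⧸ A`, this quotient is a vector space over `ZMod p`. As `𝔭` is a proper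
invertible ideal, `𝔭⁻¹ * 𝔞` is not contained in `𝔞`, so for each `𝔭` there is a nonzero class `v 𝔭`
in `(𝔭⁻¹ * 𝔞) ⧸ 𝔞`, and it is killed by `𝔭`. Elements killed by distinct maximal ideals are linearly
independent (`linearIndependent_of_killed`), so some linear form on `K ⧸ A` takes the value `1` at
every `v 𝔭`. Composing it with a faithful character of `ZMod p` gives `χ`.
-/

/-- If `x i ≠ 0` is killed by the maximal ideal `P i`, with the `P i` distinct, then an element of
`∏ i ≠ j, P i` outside `P j` isolates the `j`-th term of a vanishing combination: that term is
killed by two comaximal ideals. -/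
theorem linearIndependent_of_killed {F O M ι : Type*} [Field F] [CommRing O] [AddCommGroup M]
    [Module F M] [Module O M] [SMulCommClass O F M] (P : ι → Ideal O)
    (hP : ∀ i, (P i).IsMaximal) (hinj : Function.Injective P) (x : ι → M) (hx : ∀ i, x i ≠ 0)
    (hk : ∀ i, ∀ r ∈ P i, r • x i = 0) : LinearIndependent F x := by
  classical
  rw [linearIndependent_iff']
  intro s c hc j hj
  have hnle : ¬ (∏ i ∈ s.erase j, P i) ≤ P j := by
    rw [(hP j).isPrime.prod_le]
    rintro ⟨i, hi, hle⟩
    exact Finset.ne_of_mem_erase hi (hinj ((hP i).eq_of_le (hP j).ne_top hle))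
  obtain ⟨r, hr, hrj⟩ := SetLike.not_le_iff_exists.mp hnle
  have h1 : r • (c j • x j) = 0 := by
    have h2 : r • ∑ i ∈ s, c i • x i = 0 := by rw [hc, smul_zero]
    rw [Finset.smul_sum, Finset.sum_eq_single j] at h2
    · exact h2
    · intro i hi hij
      rw [smul_comm, hk i r, smul_zero]
      exact (Ideal.prod_le_inf.trans (Finset.inf_le (Finset.mem_erase.mpr ⟨hij, hi⟩))) hr
    · exact fun h => absurd hj h
  obtain ⟨y, z, hz, hyz⟩ := (hP j).exists_inv hrj
  have h3 : c j • x j = 0 := by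
    rw [← one_smul O (c j • x j), ← hyz, add_smul, mul_smul, h1, smul_zero, zero_add,
      smul_comm, hk j z hz, smul_zero]
  exact (smul_eq_zero.mp h3).resolve_right (hx j)

/-- Compose a linear form equal to `1` at every `v i` with the faithful character of `ZMod p`. -/
theorem exists_addChar_ne_one (p : ℕ) [Fact p.Prime] {M ι : Type*} [AddCommGroup M]
    [Module (ZMod p) M] (v : ι → M) (hli : LinearIndependent (ZMod p) v) :
    ∃ χ : AddChar M ℂˣ, ∀ i, χ (v i) ≠ 1 := by
  let b := Module.Basis.extend hli.linearIndepOn_id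
  let f : M →ₗ[ZMod p] ZMod p := b.constr (ZMod p) fun _ => (1 : ZMod p)
  have hf : ∀ i, f (v i) = 1 := by
    intro i
    have hmem := Module.Basis.subset_extend hli.linearIndepOn_id (Set.mem_range_self i)
    have := b.constr_basis (ZMod p) (fun _ => (1 : ZMod p)) ⟨_, hmem⟩
    rwa [Module.Basis.extend_apply_self] at this
  refine ⟨(Circle.toUnits.compAddChar (ZMod.toCircle (N := p))).compAddMonoidHom
    f.toAddMonoidHom, fun i h => ?_⟩
  have h1 : Circle.toUnits (ZMod.toCircle (f (v i))) = 1 := h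
  rw [hf] at h1
  have h2 : ZMod.toCircle (1 : ZMod p) = ZMod.toCircle (0 : ZMod p) := by
    rw [AddChar.map_zero_eq_one]
    ext
    simpa using congrArg Units.val h1
  exact one_ne_zero (ZMod.injective_toCircle h2)

open nonZeroDivisors in
/-- Otherwise multiplying by `𝔭` would give `𝔞 ≤ 𝔭 * 𝔞`, and cancelling `𝔞` would give `𝔭 = ⊤`. -/
theorem not_inv_mul_le {O K : Type*} [CommRing O] [IsDedekindDomain O] [Field K] [Algebra O K]
    [IsFractionRing O K] (𝔞 𝔭 : Ideal O) (h𝔞 : 𝔞 ≠ 0) (h𝔭 : 𝔭 ≠ 0) (htop : 𝔭 ≠ ⊤) :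
    ¬ ((1 : Submodule O K) / Submodule.map (Algebra.linearMap O K) 𝔭) *
        Submodule.map (Algebra.linearMap O K) 𝔞 ≤ Submodule.map (Algebra.linearMap O K) 𝔞 := by
  intro h
  have hp0 : (𝔭 : FractionalIdeal O⁰ K) ≠ 0 := FractionalIdeal.coeIdeal_ne_zero.mpr h𝔭
  have ha0 : (𝔞 : FractionalIdeal O⁰ K) ≠ 0 := FractionalIdeal.coeIdeal_ne_zero.mpr h𝔞
  have h1 : (𝔭 : FractionalIdeal O⁰ K)⁻¹ * 𝔞 ≤ 𝔞 := by
    rw [← FractionalIdeal.coe_le_coe, FractionalIdeal.coe_mul, FractionalIdeal.inv_eq,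
      FractionalIdeal.coe_div hp0, FractionalIdeal.coe_one]
    exact h
  have h2 : (𝔞 : FractionalIdeal O⁰ K) ≤ 𝔭 * 𝔞 := by
    calc (𝔞 : FractionalIdeal O⁰ K) = 𝔭 * ((𝔭 : FractionalIdeal O⁰ K)⁻¹ * 𝔞) := by
          rw [← mul_assoc, mul_inv_cancel₀ hp0, one_mul]
      _ ≤ 𝔭 * 𝔞 := mul_le_mul_right h1 _
  rw [← FractionalIdeal.coeIdeal_mul, FractionalIdeal.coeIdeal_le_coeIdeal] at h2
  have h3 : 𝔭 * 𝔞 = 1 * 𝔞 := by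
    rw [one_mul]
    exact le_antisymm Ideal.mul_le_right h2
  exact htop ((mul_right_cancel₀ h𝔞 h3).trans Ideal.one_eq_top)

/-- Lemma 3.6.5 of the paper.
Let `p` be a prime and `O` a Dedekind domain of characteristic `p` which is not a field, all of
whose residue fields at maximal ideals are finite; let `K = Frac(O)`.  For every nonzero ideal
`𝔞` of `O`, regarded as the `O`-submodule `A` of `K`, there is an additive character
`χ : (K⧸𝔞, +) → ℂˣ` whose restriction to `(𝔭⁻¹·𝔞)⧸𝔞` is non-trivial for every maximal ideal
`𝔭` of `O`. -/
theorem stmt_4 (p : ℕ) (hp : p.Prime)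
    (O : Type*) [CommRing O] [IsDedekindDomain O] [CharP O p] (hO : ¬IsField O)
    (hfin : ∀ 𝔭 : Ideal O, 𝔭.IsMaximal → Finite (O ⧸ 𝔭))
    (K : Type*) [Field K] [Algebra O K] [IsFractionRing O K]
    (𝔞 : Ideal O) (h𝔞 : 𝔞 ≠ 0)
    (A : Submodule O K) (hA : A = Submodule.map (Algebra.linearMap O K) 𝔞) :
    ∃ χ : AddChar (K ⧸ A) ℂˣ,
      ∀ 𝔭 : Ideal O, 𝔭.IsMaximal →
        ∃ x : K,
          x ∈ ((1 : Submodule O K) / Submodule.map (Algebra.linearMap O K) 𝔭) * A ∧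
          χ (Submodule.Quotient.mk x) ≠ 1 := by
  classical
  have : Fact p.Prime := ⟨hp⟩
  have hpK : ∀ y : K ⧸ A, p • y = 0 := fun y => by
    rw [← Nat.cast_smul_eq_nsmul O, CharP.cast_eq_zero, zero_smul]
  let : Module (ZMod p) (K ⧸ A) := AddCommGroup.zmodModule hpK
  have hex : ∀ 𝔭 : {I : Ideal O // I.IsMaximal}, ∃ x : K,
      x ∈ ((1 : Submodule O K) / Submodule.map (Algebra.linearMap O K) 𝔭.1) * A ∧ x ∉ A := by
    intro 𝔭
    have h := not_inv_mul_le (K := K) 𝔞 𝔭.1 h𝔞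
      (Ring.ne_bot_of_isMaximal_of_not_isField 𝔭.2 hO) 𝔭.2.ne_top
    rw [← hA] at h
    exact SetLike.not_le_iff_exists.mp h
  choose x hx hxA using hex
  have hli : LinearIndependent (ZMod p) (fun i => (Submodule.Quotient.mk (x i) : K ⧸ A)) := by
    have : SMulCommClass O (ZMod p) (K ⧸ A) :=
      ⟨fun r c y => ZMod.map_smul (DistribSMul.toAddMonoidHom (K ⧸ A) r) c y⟩
    refine linearIndependent_of_killed (O := O) Subtype.val Subtype.prop Subtype.val_injective _
      ?_ ?_
    · intro i h
      exact hxA i ((Submodule.Quotient.mk_eq_zero A).mp h)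
    · intro i r hr
      rw [← Submodule.Quotient.mk_smul, Submodule.Quotient.mk_eq_zero, Algebra.smul_def]
      have h1 := Submodule.mul_mem_mul
        (Submodule.mem_map_of_mem (f := Algebra.linearMap O K) hr) (hx i)
      rw [← mul_assoc] at h1
      have h2 := mul_le_mul' (Submodule.mul_one_div_le_one
        (I := Submodule.map (Algebra.linearMap O K) i.1)) (le_refl A) h1
      rwa [one_mul] at h2
  obtain ⟨χ, hχ⟩ := exists_addChar_ne_one p _ hli
  exact ⟨χ, fun 𝔭 h𝔭 => ⟨x ⟨𝔭, h𝔭⟩, hx ⟨𝔭, h𝔭⟩, hχ ⟨𝔭, h𝔭⟩⟩⟩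
end

section
/- Let O be a Dedekind domain which is not a field, with field of fractions K, let v be a maximal ideal of O, let K_v be the v-adic completion of K and O_v ⊆ K_v its valuation ring. Regard the quotient K_v⧸O_v as an O-module via the canonical ring homomorphism O → O_v. Then the map O_v → End_O(K_v⧸O_v), sending c ∈ O_v to the endomorphism induced by multiplication by c, is an isomorphism of rings; in particular every O-linear endomorphism of K_v⧸O_v is multiplication by a unique element of O_v. -/
open IsDedekindDomain

/-!
Fix `π ∈ O` generating the maximal ideal of `O_v` and let `p` be its image in `K_v`. Since `K_v = ⋃ p⁻ⁿ O_v` and `O` is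
dense in `O_v`, every class in `K_v ⧸ O_v` is an `O`-multiple of the class of some `p⁻ⁿ`
(`exists_sub_div_pow_mem`), so an `O`-linear endomorphism `f` is determined by the values
`f [p⁻ⁿ]`. As `πⁿ` kills `[p⁻ⁿ]`, these have the form `[cₙ p⁻ⁿ]` with `cₙ ∈ O_v`, and
`π [p⁻⁽ⁿ⁺¹⁾] = [p⁻ⁿ]` forces `cₙ₊₁ ≡ cₙ` modulo `pⁿ`. By completeness (`exists_limit`) there is
`c ∈ O_v` with `c ≡ cₙ` modulo `pⁿ` for all `n`, and `f` is multiplication by `c` (`exists_eq_mul`). Injectivity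
holds because an element of `O_v` killing every `[p⁻ⁿ]` lies in `⋂ pⁿ O_v = 0`.
-/

namespace AdicEnd

variable {O : Type*} [CommRing O] [IsDedekindDomain O]
  {K : Type*} [Field K] [Algebra O K] [IsFractionRing O K] {v : HeightOneSpectrum O}

theorem exists_uniformizer (K : Type*) [Field K] [Algebra O K] [IsFractionRing O K]
    (v : HeightOneSpectrum O) :
    ∃ π : O, Valued.v (algebraMap O (v.adicCompletion K) π) = WithZero.exp (-1 : ℤ) := by
  obtain ⟨π, hπ⟩ := v.intValuation_exists_uniformizer
  refine ⟨π, ?_⟩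
  rw [← hπ, ← v.valuation_of_algebraMap (K := K)]
  exact v.valuedAdicCompletion_eq_valuation π

variable {p : v.adicCompletion K}

theorem ne_zero_of_valued_eq (hp : Valued.v p = WithZero.exp (-1 : ℤ)) : p ≠ 0 := by
  rintro rfl
  simp [WithZero.exp_ne_zero.symm] at hp

theorem div_pow_mem_iff (hp : Valued.v p = WithZero.exp (-1 : ℤ)) (x : v.adicCompletion K)
    (n : ℕ) :
    x / p ^ n ∈ v.adicCompletionIntegers K ↔ Valued.v x ≤ WithZero.exp (-(n : ℤ)) := by
  have hpn : Valued.v (p ^ n) = WithZero.exp (-(n : ℤ)) := by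
    rw [map_pow, hp, ← WithZero.exp_nsmul]; simp
  rw [HeightOneSpectrum.mem_adicCompletionIntegers, map_div₀, hpn,
    div_le_one₀ (by simp)]

theorem exists_pow_mul_mem (hp : Valued.v p = WithZero.exp (-1 : ℤ)) (x : v.adicCompletion K) :
    ∃ n : ℕ, p ^ n * x ∈ v.adicCompletionIntegers K := by
  rcases eq_or_ne x 0 with rfl | hx
  · exact ⟨0, by simp⟩
  have hx' : Valued.v x⁻¹ ≠ 0 := by simpa using hx
  obtain ⟨n, hn, -⟩ := WithZero.exists_exp_neg_natCast_lt_and_lt hx' hx'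
  refine ⟨n, ?_⟩
  have hpn : Valued.v (p ^ n) = WithZero.exp (-(n : ℤ)) := by
    rw [map_pow, hp, ← WithZero.exp_nsmul]; simp
  rw [HeightOneSpectrum.mem_adicCompletionIntegers, map_mul, hpn]
  rw [map_inv₀] at hn
  calc _ ≤ (Valued.v x)⁻¹ * Valued.v x := by gcongr
    _ = 1 := inv_mul_cancel₀ (by simpa using hx)

/-- `⋂ pⁿ O_v = 0`. -/
theorem eq_zero_of_forall_div_pow_mem (hp : Valued.v p = WithZero.exp (-1 : ℤ))
    {x : v.adicCompletion K} (h : ∀ n : ℕ, x / p ^ n ∈ v.adicCompletionIntegers K) : x = 0 := by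
  by_contra hx
  have hx' : Valued.v x ≠ 0 := by simpa using hx
  obtain ⟨n, hn, -⟩ := WithZero.exists_exp_neg_natCast_lt_and_lt hx' hx'
  exact absurd ((div_pow_mem_iff hp x n).1 (h n)) (not_le.2 hn)

/-- The sets `{y | v y ≤ exp (-n)}`, `n : ℕ`, are cofinal among the basic neighbourhoods of `0`. -/
theorem exists_exp_le (γ : (MonoidWithZeroHom.ValueGroup₀
      (.ofClass (Valued.v : Valuation (v.adicCompletion K) (WithZero (Multiplicative ℤ)))))ˣ) :
    ∃ n : ℕ, ∀ y : v.adicCompletion K, Valued.v y ≤ WithZero.exp (-(n : ℤ)) →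
      Valued.v.restrict y < γ.1 := by
  have h0 : MonoidWithZeroHom.ValueGroup₀.embedding γ.1 ≠ 0 := by simp
  obtain ⟨n, hn, -⟩ := WithZero.exists_exp_neg_natCast_lt_and_lt h0 h0
  refine ⟨n, fun y hy => ?_⟩
  rw [Valuation.restrict_lt_iff_lt_embedding]
  exact hy.trans_lt hn

theorem isClosed_integers : IsClosed (v.adicCompletionIntegers K : Set (v.adicCompletion K)) :=
  Valued.isClosed_valuationSubring _

/-- `O` is dense in `O_v`. -/
theorem exists_sub_div_pow_mem (hp : Valued.v p = WithZero.exp (-1 : ℤ))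
    {u : v.adicCompletion K} (hu : u ∈ v.adicCompletionIntegers K) (n : ℕ) :
    ∃ a : O, (u - algebraMap O (v.adicCompletion K) a) / p ^ n ∈ v.adicCompletionIntegers K := by
  have hp0 := ne_zero_of_valued_eq hp
  have hcont : Continuous fun y : v.adicCompletion K => (u - y) / p ^ n := by fun_prop
  have hopen : IsOpen {y : v.adicCompletion K | (u - y) / p ^ n ∈ v.adicCompletionIntegers K} :=
    (Valued.isOpen_valuationSubring (v.adicCompletion K)).preimage hcont
  obtain ⟨k, hk⟩ := (HeightOneSpectrum.denseRange_algebraMap (K := K) v).exists_mem_open hopen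
    ⟨u, by simp⟩
  have hkmem : algebraMap K (v.adicCompletion K) k ∈ v.adicCompletionIntegers K := by
    have h1 : Valued.v (u - algebraMap K (v.adicCompletion K) k) ≤ 1 :=
      ((div_pow_mem_iff hp _ n).1 hk).trans (by
        rw [← WithZero.exp_zero, WithZero.exp_le_exp]; simp)
    have := sub_mem hu (show _ ∈ v.adicCompletionIntegers K from h1)
    simpa using this
  have hval : ∀ k : K, Valued.v (algebraMap K (v.adicCompletion K) k) = v.valuation K k :=
    fun k => v.valuedAdicCompletion_eq_valuation' k
  rw [HeightOneSpectrum.mem_adicCompletionIntegers, hval] at hkmem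
  obtain ⟨a, ha⟩ := v.exists_valuation_sub_lt_of_integer hkmem
    (Units.mk0 (WithZero.exp (-(n : ℤ))) WithZero.exp_ne_zero)
  refine ⟨a, ?_⟩
  have h2 : (algebraMap K (v.adicCompletion K) (algebraMap O K a - k)) / p ^ n ∈
      v.adicCompletionIntegers K := by
    rw [div_pow_mem_iff hp, hval]
    exact ha.le
  have h3 := sub_mem hk h2
  rw [← sub_div, map_sub, ← IsScalarTower.algebraMap_apply] at h3
  simpa using h3

/-- Completeness of `K_v` in congruence form: a sequence with `cₙ₊₁ ≡ cₙ` modulo `pⁿ` has a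
limit `c` with `c ≡ cₙ` modulo `pⁿ` for every `n`. -/
theorem exists_limit (hp : Valued.v p = WithZero.exp (-1 : ℤ)) {s : ℕ → v.adicCompletion K}
    (hs : ∀ n, (s (n + 1) - s n) / p ^ n ∈ v.adicCompletionIntegers K) :
    ∃ c : v.adicCompletion K, ∀ n, (c - s n) / p ^ n ∈ v.adicCompletionIntegers K := by
  have hp0 := ne_zero_of_valued_eq hp
  have hpmem : p ∈ v.adicCompletionIntegers K := by
    rw [HeightOneSpectrum.mem_adicCompletionIntegers, hp, ← WithZero.exp_zero,
      WithZero.exp_le_exp]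
    simp
  have tele : ∀ n m, n ≤ m → (s m - s n) / p ^ n ∈ v.adicCompletionIntegers K := by
    intro n m hnm
    induction m, hnm using Nat.le_induction with
    | base => simp
    | succ m hnm ih =>
      have h := add_mem (mul_mem (pow_mem hpmem (m - n)) (hs m)) ih
      have e : p ^ (m - n) * ((s (m + 1) - s m) / p ^ m) + (s m - s n) / p ^ n =
          (s (m + 1) - s n) / p ^ n := by
        obtain ⟨k, rfl⟩ := Nat.exists_eq_add_of_le hnm
        rw [Nat.add_sub_cancel_left, pow_add]
        field_simp
        ring
      rwa [e] at h
  have hc : CauchySeq s := by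
    rw [(Valued.hasBasis_uniformity (v.adicCompletion K) _).cauchySeq_iff']
    intro γ _
    obtain ⟨N, hN⟩ := exists_exp_le γ
    refine ⟨N, fun n hn => ?_⟩
    have := hN _ ((div_pow_mem_iff hp _ N).1 (tele N n hn))
    rw [Valuation.map_sub_swap] at this
    exact this
  obtain ⟨c, hc⟩ := cauchySeq_tendsto_of_complete hc
  refine ⟨c, fun n => isClosed_integers.mem_of_tendsto ((hc.sub_const (s n)).div_const (p ^ n)) ?_⟩
  filter_upwards [Filter.eventually_ge_atTop n] with m hm using tele n m hm

/-- Every `O`-linear endomorphism of `K_v ⧸ O_v` is multiplication by an element of `O_v`. -/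
theorem exists_eq_mul {Ov : Submodule O (v.adicCompletion K)}
    (hmem : ∀ x, x ∈ Ov ↔ x ∈ v.adicCompletionIntegers K) {π : O}
    (hp : Valued.v (algebraMap O (v.adicCompletion K) π) = WithZero.exp (-1 : ℤ))
    (f : Module.End O (v.adicCompletion K ⧸ Ov)) :
    ∃ c : v.adicCompletionIntegers K, ∀ x : v.adicCompletion K,
      f (Submodule.Quotient.mk x) = Submodule.Quotient.mk ((c : v.adicCompletion K) * x) := by
  have hp0 := ne_zero_of_valued_eq hp
  obtain ⟨p, hpdef⟩ : ∃ p, p = algebraMap O (v.adicCompletion K) π := ⟨_, rfl⟩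
  rw [← hpdef] at hp hp0
  have hy : ∀ n : ℕ, ∃ y : v.adicCompletion K,
      f (Submodule.Quotient.mk (1 / p ^ n)) = Submodule.Quotient.mk y := fun n =>
    (Submodule.Quotient.mk_surjective Ov (f (Submodule.Quotient.mk (1 / p ^ n)))).imp
      fun _ h => h.symm
  choose y hy using hy
  have hstep : ∀ n, p * y (n + 1) - y n ∈ v.adicCompletionIntegers K := by
    intro n
    rw [← hmem, ← Submodule.Quotient.eq, ← hy n, hpdef, ← Algebra.smul_def,
      Submodule.Quotient.mk_smul, ← hy (n + 1), ← map_smul, ← Submodule.Quotient.mk_smul,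
      Algebra.smul_def, ← hpdef]
    congr 2
    rw [pow_succ]
    field_simp
  obtain ⟨c, hc⟩ := exists_limit hp (s := fun n => p ^ n * y n) (fun n => by
    have e : (p ^ (n + 1) * y (n + 1) - p ^ n * y n) / p ^ n = p * y (n + 1) - y n := by
      field_simp
      ring
    rw [e]
    exact hstep n)
  have hcmem : c ∈ v.adicCompletionIntegers K := by
    have h0 : y 0 ∈ v.adicCompletionIntegers K := by
      rw [← hmem, ← Submodule.Quotient.mk_eq_zero, ← hy 0,
        (Submodule.Quotient.mk_eq_zero Ov).2 ((hmem _).2 (by simp)), map_zero]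
    have h1 : c - y 0 ∈ v.adicCompletionIntegers K := by
      have := hc 0
      rwa [pow_zero, one_mul, div_one] at this
    have h2 := add_mem h1 h0
    rwa [sub_add_cancel] at h2
  refine ⟨⟨c, hcmem⟩, fun x => ?_⟩
  obtain ⟨n, hn⟩ := exists_pow_mul_mem hp x
  obtain ⟨a, ha⟩ := exists_sub_div_pow_mem hp hn n
  -- `a` approximates `pⁿ x` modulo `pⁿ`, so `[x] = a • [p⁻ⁿ]`.
  have hx : (Submodule.Quotient.mk x : v.adicCompletion K ⧸ Ov) =
      a • Submodule.Quotient.mk (1 / p ^ n) := by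
    rw [← Submodule.Quotient.mk_smul, Submodule.Quotient.eq, hmem, Algebra.smul_def]
    convert ha using 1
    field_simp
  have hcn : (Submodule.Quotient.mk (c * (1 / p ^ n)) : v.adicCompletion K ⧸ Ov) =
      Submodule.Quotient.mk (y n) := by
    rw [Submodule.Quotient.eq, hmem]
    convert hc n using 1
    field_simp
  rw [hx, map_smul, hy n, ← hcn, ← Submodule.Quotient.mk_smul, Submodule.Quotient.eq, hmem,
    Algebra.smul_def]
  convert mul_mem hcmem (neg_mem ha) using 1
  field_simp
  ring

end AdicEnd

open AdicEnd in
/-- from the proof of Proposition 3.6.9 of the paper.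
Let `O` be a Dedekind domain which is not a field, `K` its fraction field, `v` a maximal ideal
of `O`, `K_v` the `v`-adic completion of `K`, and `O_v ⊆ K_v` its valuation ring (regarded,
via its carrier set `Ov`, as an `O`-submodule of `K_v`).  Then the map
`O_v → End_O(K_v⧸O_v)` sending `c` to the endomorphism induced by multiplication by `c` is a
ring isomorphism; in particular every `O`-linear endomorphism of `K_v⧸O_v` is multiplication
by a unique element of `O_v`. -/
theorem stmt_5 (O : Type*) [CommRing O] [IsDedekindDomain O] (hO : ¬IsField O)
    (K : Type*) [Field K] [Algebra O K] [IsFractionRing O K]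
    (v : HeightOneSpectrum O)
    (Ov : Submodule O (v.adicCompletion K))
    (hOv : (Ov : Set (v.adicCompletion K)) = (v.adicCompletionIntegers K : Set (v.adicCompletion K))) :
    ∃ e : (v.adicCompletionIntegers K) ≃+* Module.End O ((v.adicCompletion K) ⧸ Ov),
      ∀ (c : v.adicCompletionIntegers K) (x : v.adicCompletion K),
        e c (Submodule.Quotient.mk x) =
          Submodule.Quotient.mk ((c : v.adicCompletion K) * x) := by
  have hmem : ∀ x, x ∈ Ov ↔ x ∈ v.adicCompletionIntegers K := fun x => by
    rw [← SetLike.mem_coe, hOv, SetLike.mem_coe]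
  let φ : v.adicCompletionIntegers K →+* Module.End O (v.adicCompletion K ⧸ Ov) :=
    { toFun := fun c => Ov.mapQ Ov (LinearMap.mulLeft O (c : v.adicCompletion K)) (by
        intro x hx
        rw [hmem] at hx
        rw [Submodule.mem_comap, LinearMap.mulLeft_apply, hmem]
        exact mul_mem c.2 hx)
      map_one' := by
        ext x
        simp
      map_mul' := fun a b => by
        ext x
        simp
      map_zero' := by
        ext x
        simp
      map_add' := fun a b => by
        ext x
        simp [add_mul] }
  have hφ : ∀ (c : v.adicCompletionIntegers K) (x : v.adicCompletion K),
      φ c (Submodule.Quotient.mk x) =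
        Submodule.Quotient.mk ((c : v.adicCompletion K) * x) := fun c x => rfl
  obtain ⟨π, hp⟩ := exists_uniformizer K v
  have hinj : Function.Injective φ := by
    rw [injective_iff_map_eq_zero]
    intro c hc
    refine Subtype.ext (eq_zero_of_forall_div_pow_mem hp fun n => ?_)
    have h := hφ c (1 / algebraMap O (v.adicCompletion K) π ^ n)
    rw [hc, LinearMap.zero_apply, eq_comm, Submodule.Quotient.mk_eq_zero, hmem] at h
    simpa [div_eq_mul_inv] using h
  have hsurj : Function.Surjective φ := by
    intro f
    obtain ⟨c, hc⟩ := exists_eq_mul hmem hp f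
    refine ⟨c, LinearMap.ext fun m => ?_⟩
    obtain ⟨x, rfl⟩ := Submodule.Quotient.mk_surjective Ov m
    rw [hφ, hc]
  exact ⟨RingEquiv.ofBijective φ ⟨hinj, hsurj⟩, hφ⟩
end

section
/- Let O be a Dedekind domain which is not a field, with field of fractions K, and let 𝔞 be a nonzero ideal of O regarded as an O-submodule of K. Let χ : (K⧸𝔞, +) → ℂˣ be a group homomorphism such that for every maximal ideal 𝔭 of O the restriction of χ to the subgroup (𝔭⁻¹·𝔞)⧸𝔞 is non-trivial. Then for every O-module endomorphism f of K⧸𝔞 with f ≠ id, the homomorphisms χ∘f and χ are distinct. -/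
/-!
Suppose `χ ∘ f = χ`. Then `χ` is trivial on the range `S` of the endomorphism `f - id` of `K ⧸ A`,
and `S` is a nonzero `O`-submodule. Since `O` is Noetherian, `S` has an associated prime: some
`s ∈ S` whose annihilator is a prime ideal `𝔭`. As `K ⧸ A` is torsion, `𝔭 ≠ 0`, so `𝔭` is maximal.
The module `(𝔭⁻¹ A) ⧸ A` is simple (`FractionalIdeal.spanSingleton_add_eq_inv_mul`), and it contains
`s`, so it is generated by `s` and lies in `S`. Hence `χ` is trivial on it, contrary to
the hypothesis at `𝔭`.
-/

open scoped nonZeroDivisors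

/-- Simplicity of `(𝔭⁻¹ J) ⧸ J`: an element `x` of `𝔭⁻¹ J` outside `J` generates `𝔭⁻¹ J`
modulo `J`. -/
lemma FractionalIdeal.spanSingleton_add_eq_inv_mul {O K : Type*} [CommRing O] [IsDedekindDomain O]
    [Field K] [Algebra O K] [IsFractionRing O K] (𝔭 : Ideal O) (hmax : 𝔭.IsMaximal)
    (h𝔭 : 𝔭 ≠ ⊥) (J : FractionalIdeal O⁰ K) (hJ : J ≠ 0) (x : K) (hx : x ∉ J)
    (hxp : spanSingleton O⁰ x * (𝔭 : FractionalIdeal O⁰ K) ≤ J) :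
    spanSingleton O⁰ x + J = (𝔭 : FractionalIdeal O⁰ K)⁻¹ * J := by
  have hp0 : (𝔭 : FractionalIdeal O⁰ K) ≠ 0 := coeIdeal_ne_zero.mpr h𝔭
  -- `x 𝔭 J⁻¹` is an integral ideal not contained in `𝔭`, hence coprime to `𝔭`.
  have hle : spanSingleton O⁰ x * (𝔭 : FractionalIdeal O⁰ K) * J⁻¹ ≤ 1 := by
    calc _ ≤ J * J⁻¹ := by gcongr
      _ = 1 := mul_inv_cancel₀ hJ
  obtain ⟨I, hI⟩ := le_one_iff_exists_coeIdeal.mp hle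
  have hnot : ¬ I ≤ 𝔭 := by
    intro h
    apply hx
    rw [← coeIdeal_le_coeIdeal K, hI] at h
    rw [← spanSingleton_le_iff_mem]
    calc spanSingleton O⁰ x
        = (spanSingleton O⁰ x * (𝔭 : FractionalIdeal O⁰ K) * J⁻¹) *
            ((𝔭 : FractionalIdeal O⁰ K)⁻¹ * J) := by field_simp
      _ ≤ (𝔭 : FractionalIdeal O⁰ K) * ((𝔭 : FractionalIdeal O⁰ K)⁻¹ * J) := by gcongr
      _ = J := by field_simp
  have hsup : I ⊔ 𝔭 = ⊤ := by
    rw [sup_comm]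
    exact hmax.1.2 _ (left_lt_sup.mpr hnot)
  have h1 : (I : FractionalIdeal O⁰ K) + 𝔭 = 1 := by
    rw [← coeIdeal_sup, hsup, coeIdeal_top]
  rw [hI] at h1
  calc spanSingleton O⁰ x + J
      = (spanSingleton O⁰ x * (𝔭 : FractionalIdeal O⁰ K) * J⁻¹ + 𝔭) *
          ((𝔭 : FractionalIdeal O⁰ K)⁻¹ * J) := by field_simp
    _ = _ := by rw [h1, one_mul]


/-- essential content of Proposition 3.6.9 of the paper.
Let `O` be a Dedekind domain which is not a field, `K = Frac(O)`, `𝔞` a nonzero ideal of `O`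
regarded as the `O`-submodule `A` of `K`, and `χ : (K⧸𝔞, +) → ℂˣ` an additive character whose
restriction to `(𝔭⁻¹·𝔞)⧸𝔞` is non-trivial for every maximal ideal `𝔭`.  Then for every
`O`-module endomorphism `f ≠ id` of `K⧸𝔞`, the characters `χ∘f` and `χ` are distinct. -/
theorem stmt_6 (O : Type*) [CommRing O] [IsDedekindDomain O] (hO : ¬IsField O)
    (K : Type*) [Field K] [Algebra O K] [IsFractionRing O K]
    (𝔞 : Ideal O) (h𝔞 : 𝔞 ≠ 0)
    (A : Submodule O K) (hA : A = Submodule.map (Algebra.linearMap O K) 𝔞)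
    (χ : AddChar (K ⧸ A) ℂˣ)
    (hχ : ∀ 𝔭 : Ideal O, 𝔭.IsMaximal →
      ∃ x : K,
        x ∈ ((1 : Submodule O K) / Submodule.map (Algebra.linearMap O K) 𝔭) * A ∧
        χ (Submodule.Quotient.mk x) ≠ 1)
    (f : (K ⧸ A) →ₗ[O] (K ⧸ A)) (hf : f ≠ LinearMap.id) :
    ∃ y : K ⧸ A, χ (f y) ≠ χ y := by
  by_contra! hcon
  set S : Submodule O (K ⧸ A) := LinearMap.range (f - LinearMap.id) with hS
  have hχS : ∀ s ∈ S, χ s = 1 := by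
    rintro _ ⟨y, rfl⟩
    rw [LinearMap.sub_apply, LinearMap.id_apply, AddChar.map_sub_eq_div, hcon, div_self']
  have hSne : S ≠ ⊥ := by
    rw [hS, Ne, LinearMap.range_eq_bot, sub_eq_zero]
    exact hf
  have : Nontrivial S := Submodule.nontrivial_iff_ne_bot.mpr hSne
  obtain ⟨𝔭, h𝔭⟩ := associatedPrimes.nonempty O S
  obtain ⟨hprime, ⟨s, hs⟩, hann⟩ := isAssociatedPrime_iff.mp h𝔭
  have hmem : ∀ r : O, r ∈ 𝔭 ↔ r • s = 0 := by
    intro r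
    rw [hann, Submodule.mem_colon_singleton, Submodule.mem_bot, ← Subtype.coe_inj]
    rfl
  obtain ⟨x, rfl⟩ := Submodule.Quotient.mk_surjective A s
  have hmem' : ∀ r : O, r ∈ 𝔭 ↔ r • x ∈ A := by
    intro r
    rw [hmem, ← Submodule.Quotient.mk_smul, Submodule.Quotient.mk_eq_zero]
  -- `K ⧸ A` is torsion: `a d` kills `n / d` modulo `A` for every `a ∈ 𝔞`.
  have h𝔭0 : 𝔭 ≠ ⊥ := by
    obtain ⟨a, ha, ha0⟩ := Submodule.exists_mem_ne_zero_of_ne_bot h𝔞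
    obtain ⟨n, d, hd, rfl⟩ := IsFractionRing.div_surjective (A := O) x
    have hd0 : algebraMap O K d ≠ 0 := IsFractionRing.to_map_ne_zero_of_mem_nonZeroDivisors hd
    refine Submodule.ne_bot_iff _ |>.mpr
      ⟨a * d, ?_, mul_ne_zero ha0 (nonZeroDivisors.ne_zero hd)⟩
    rw [hmem', hA]
    refine ⟨a * n, 𝔞.mul_mem_right _ ha, ?_⟩
    rw [Algebra.linearMap_apply, Algebra.smul_def, map_mul, map_mul]
    field_simp
  have hmax : 𝔭.IsMaximal := hprime.isMaximal h𝔭0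
  have hx : x ∉ A := by
    intro h
    exact hprime.ne_top ((Ideal.eq_top_iff_one _).mpr ((hmem' 1).mpr (by rwa [one_smul])))
  have hAJ : ((𝔞 : FractionalIdeal O⁰ K) : Submodule O K) = A := by
    rw [hA]; rfl
  have key := FractionalIdeal.spanSingleton_add_eq_inv_mul (K := K) 𝔭 hmax h𝔭0 𝔞
    (FractionalIdeal.coeIdeal_ne_zero.mpr h𝔞) x
    (by rwa [← FractionalIdeal.mem_coe, hAJ])
    (by
      rw [FractionalIdeal.spanSingleton_mul_le_iff]
      intro z hz
      obtain ⟨r, hr, rfl⟩ := (FractionalIdeal.mem_coeIdeal _).mp hz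
      rw [← FractionalIdeal.mem_coe, hAJ, mul_comm, ← Algebra.smul_def]
      exact (hmem' r).mp hr)
  obtain ⟨z, hz, hz1⟩ := hχ 𝔭 hmax
  apply hz1
  apply hχS
  have hz' : z ∈ (𝔭 : FractionalIdeal O⁰ K)⁻¹ * (𝔞 : FractionalIdeal O⁰ K) := by
    rw [← FractionalIdeal.mem_coe, FractionalIdeal.coe_mul, hAJ, FractionalIdeal.inv_eq,
      FractionalIdeal.coe_div (FractionalIdeal.coeIdeal_ne_zero.mpr h𝔭0), FractionalIdeal.coe_one]
    exact hz
  rw [← key, FractionalIdeal.mem_add] at hz'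
  obtain ⟨i, hi, j, hj, rfl⟩ := hz'
  obtain ⟨r, rfl⟩ := (FractionalIdeal.mem_spanSingleton _).mp hi
  rw [← FractionalIdeal.mem_coe, hAJ] at hj
  rw [Submodule.Quotient.mk_add, (Submodule.Quotient.mk_eq_zero A).mpr hj, add_zero,
    Submodule.Quotient.mk_smul]
  exact S.smul_mem r hs
end

section
/- Let O be a Dedekind domain which is not a field, with field of fractions K. Let L be a nonzero fractional ideal of O (a nonzero finitely generated O-submodule of K), let 𝔞, 𝔟 be nonzero ideals of O and let 𝔡 = 𝔞 + 𝔟 be their gcd. Since 𝔟⁻¹·L ⊆ 𝔞⁻¹𝔟⁻¹·L and L ⊆ 𝔞⁻¹·L, the inclusion induces an O-linear map π : (𝔟⁻¹·L)⧸L → (𝔞⁻¹𝔟⁻¹·L)⧸(𝔞⁻¹·L). Then the kernel of π equals (𝔡⁻¹·L)⧸L and the image of π equals ((𝔞 ∩ 𝔟)⁻¹·L)⧸(𝔞⁻¹·L). -/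
/-!
The nonzero fractional ideals of a Dedekind domain form a group under multiplication, and inversion
reverses inclusion, so it exchanges sums and intersections: `(I + J)⁻¹ = I⁻¹ ⊓ J⁻¹` and
`(I ⊓ J)⁻¹ = I⁻¹ + J⁻¹`. Multiplication by a fractional ideal distributes over sums and
intersections. Hence, as submodules of `K`,
`𝔟⁻¹L ⊓ 𝔞⁻¹L = 𝔡⁻¹L` and `𝔟⁻¹L + 𝔞⁻¹L = (𝔞 ⊓ 𝔟)⁻¹L`.
A class in `𝔟⁻¹L ⧸ L` is killed by `π` exactly when a representative lies in `𝔞⁻¹L`, which gives the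
kernel; the image of `π` is the image of `𝔟⁻¹L + 𝔞⁻¹L` in `K ⧸ 𝔞⁻¹L`, which gives the second claim.
-/

open scoped nonZeroDivisors

section FractionalIdealLattice

variable {O : Type*} [CommRing O] [IsDedekindDomain O]
  {K : Type*} [Field K] [Algebra O K] [IsFractionRing O K]

theorem fractionalIdeal_inv_sup {I J : FractionalIdeal O⁰ K} (hI : I ≠ 0) (hJ : J ≠ 0) :
    (I ⊔ J)⁻¹ = I⁻¹ ⊓ J⁻¹ := by
  have hS : I ⊔ J ≠ 0 := fun h => hI (le_antisymm (le_sup_left.trans h.le) (zero_le))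
  have hle : (I ⊔ J)⁻¹ ≤ I⁻¹ ⊓ J⁻¹ :=
    le_inf (FractionalIdeal.inv_anti_mono hI hS le_sup_left)
      (FractionalIdeal.inv_anti_mono hJ hS le_sup_right)
  have hX : I⁻¹ ⊓ J⁻¹ ≠ 0 := fun h =>
    inv_ne_zero hS (le_antisymm (hle.trans h.le) (zero_le))
  refine le_antisymm hle ?_
  rw [FractionalIdeal.le_inv_comm hX hS]
  exact sup_le ((FractionalIdeal.le_inv_comm hX hI).1 inf_le_left)
    ((FractionalIdeal.le_inv_comm hX hJ).1 inf_le_right)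

theorem fractionalIdeal_inv_inf {I J : FractionalIdeal O⁰ K} (hI : I ≠ 0) (hJ : J ≠ 0) :
    (I ⊓ J)⁻¹ = I⁻¹ ⊔ J⁻¹ := by
  rw [← inv_inv (I⁻¹ ⊔ J⁻¹), fractionalIdeal_inv_sup (inv_ne_zero hI) (inv_ne_zero hJ),
    inv_inv, inv_inv]

/-- For a nonzero ideal `I`, the submodule `{x ∈ K | x I ⊆ O}` underlies the inverse of `I` as a
fractional ideal. -/
theorem one_div_map_eq_coe_inv {I : Ideal O} (hI : I ≠ ⊥) :
    (1 : Submodule O K) / Submodule.map (Algebra.linearMap O K) I =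
      (((I : FractionalIdeal O⁰ K)⁻¹ : FractionalIdeal O⁰ K) : Submodule O K) := by
  rw [FractionalIdeal.inv_eq,
    FractionalIdeal.coe_div (FractionalIdeal.coeIdeal_ne_zero.2 hI), FractionalIdeal.coe_one]
  rfl

end FractionalIdealLattice

/-- Lemma 1.2.4 of the paper, transported to fractional ideals.
Let `O` be a Dedekind domain which is not a field, `K = Frac(O)`, `L` a nonzero fractional
ideal of `O`, and `𝔞, 𝔟` nonzero ideals with gcd `𝔡 = 𝔞 + 𝔟`.  Since `L ⊆ 𝔞⁻¹·L` the
inclusion `𝔟⁻¹·L ⊆ 𝔞⁻¹𝔟⁻¹·L` induces an `O`-linear map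
`π : (𝔟⁻¹·L)⧸L → (𝔞⁻¹𝔟⁻¹·L)⧸(𝔞⁻¹·L)` (realized below as the restriction to
`(𝔟⁻¹·L)⧸L ⊆ K⧸L` of the map `K⧸L → K⧸(𝔞⁻¹·L)` induced by the identity of `K`).  Then the
kernel of `π` is `(𝔡⁻¹·L)⧸L` and its image is `((𝔞 ∩ 𝔟)⁻¹·L)⧸(𝔞⁻¹·L)`. -/
theorem stmt_8 (O : Type*) [CommRing O] [IsDedekindDomain O] (hO : ¬IsField O)
    (K : Type*) [Field K] [Algebra O K] [IsFractionRing O K]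
    (L : Submodule O K) (hL0 : L ≠ ⊥) (hLfg : L.FG)
    (𝔞 𝔟 : Ideal O) (h𝔞 : 𝔞 ≠ 0) (h𝔟 : 𝔟 ≠ 0)
    (Ainv Binv Dinv Cinv : Submodule O K)
    (hAinv : Ainv = 1 / Submodule.map (Algebra.linearMap O K) 𝔞)
    (hBinv : Binv = 1 / Submodule.map (Algebra.linearMap O K) 𝔟)
    (hDinv : Dinv = 1 / Submodule.map (Algebra.linearMap O K) (𝔞 + 𝔟))
    (hCinv : Cinv = 1 / Submodule.map (Algebra.linearMap O K) (𝔞 ⊓ 𝔟))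
    (hle : L ≤ LinearMap.ker (Submodule.mkQ (Ainv * L)))
    (π : (K ⧸ L) →ₗ[O] K ⧸ (Ainv * L))
    (hπ : π = Submodule.liftQ L (Submodule.mkQ (Ainv * L)) hle) :
    Submodule.map (Submodule.mkQ L) (Binv * L) ⊓ LinearMap.ker π =
        Submodule.map (Submodule.mkQ L) (Dinv * L) ∧
      Submodule.map π (Submodule.map (Submodule.mkQ L) (Binv * L)) =
        Submodule.map (Submodule.mkQ (Ainv * L)) (Cinv * L) := by
  obtain ⟨M, rfl⟩ : ∃ M : FractionalIdeal O⁰ K, (M : Submodule O K) = L :=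
    ⟨⟨L, FractionalIdeal.isFractional_of_fg hLfg⟩, rfl⟩
  have hI : (𝔞 : FractionalIdeal O⁰ K) ≠ 0 := FractionalIdeal.coeIdeal_ne_zero.2 h𝔞
  have hJ : (𝔟 : FractionalIdeal O⁰ K) ≠ 0 := FractionalIdeal.coeIdeal_ne_zero.2 h𝔟
  have hsup : 𝔞 + 𝔟 ≠ ⊥ := fun h => h𝔞 (le_bot_iff.1 (le_sup_left.trans h.le))
  have hinf : 𝔞 ⊓ 𝔟 ≠ ⊥ := fun h =>
    mul_ne_zero h𝔞 h𝔟 (le_bot_iff.1 (Ideal.mul_le_inf.trans h.le))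
  rw [one_div_map_eq_coe_inv h𝔞] at hAinv
  rw [one_div_map_eq_coe_inv h𝔟] at hBinv
  rw [one_div_map_eq_coe_inv hsup, Submodule.add_eq_sup, FractionalIdeal.coeIdeal_sup,
    ← FractionalIdeal.sup_eq_add, fractionalIdeal_inv_sup hI hJ] at hDinv
  rw [one_div_map_eq_coe_inv hinf, FractionalIdeal.coeIdeal_inf,
    fractionalIdeal_inv_inf hI hJ] at hCinv
  have hD : Binv * (M : Submodule O K) ⊓ Ainv * M = Dinv * M := by
    rw [hAinv, hBinv, hDinv, ← FractionalIdeal.coe_mul, ← FractionalIdeal.coe_mul,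
      ← FractionalIdeal.coe_mul, ← FractionalIdeal.coe_inf,
      inf_mul₀ (zero_le), inf_comm]
  have hC : Binv * (M : Submodule O K) ⊔ Ainv * M = Cinv * M := by
    rw [hAinv, hBinv, hCinv, FractionalIdeal.coe_sup, Submodule.sup_mul, sup_comm]
  have hcomp : π ∘ₗ Submodule.mkQ (M : Submodule O K) = Submodule.mkQ (Ainv * (M : Submodule O K)) := by
    rw [hπ, Submodule.liftQ_mkQ]
  constructor
  · -- The kernel of `π` pulls back to `𝔞⁻¹L` in `K`.
    rw [← hD, Submodule.map_inf_eq_map_inf_comap, ← LinearMap.ker_comp, hcomp, Submodule.ker_mkQ]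
  · -- Enlarging `𝔟⁻¹L` by `𝔞⁻¹L` does not change its image in `K ⧸ 𝔞⁻¹L`.
    rw [← Submodule.map_comp, hcomp, ← hC, Submodule.map_sup, Submodule.mkQ_map_self, sup_bot_eq]
end

section
/- Let β > 0 be a real number. Let G : ℂ → ℂ be a function which is continuous on the closed strip {z ∈ ℂ : 0 ≤ Im z ≤ β} and holomorphic (complex differentiable) at every point of the open strip {z ∈ ℂ : 0 < Im z < β}. If G(t + iβ) = 0 for every t ∈ ℝ, then G vanishes identically on the closed strip {z : 0 ≤ Im z ≤ β}. -/
/-!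
The function `G` is first shown to vanish on the upper half `β / 2 < Im z < β` of the strip,
without extending it across the boundary line. Given such a `c`, let `h = β - Im c`. The square of
half-side `h` centred at `c` lies in the closed strip, and its top edge lies on `ℝ + iβ`, where `G`
is zero. The product `H w = G (c + w) * G (c + i w) * G (c - w) * G (c - i w)` of the four
quarter-turn rotates of `G` about `c` therefore vanishes on the whole boundary of the square.
By the maximum modulus principle `H` vanishes inside as well, so `H 0 = G c ^ 4 = 0`.

The identity theorem then propagates the vanishing to the open strip, and continuity to its closure.
-/

open Set Complex Topology in
/-- Vanishing on the upper half of the open strip, by the maximum modulus principle applied to the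
product of the four quarter-turn rotates of `G` about `c`. -/
lemma eq_zero_of_upper_half (β : ℝ) (G : ℂ → ℂ)
    (hcont : ContinuousOn G {z : ℂ | 0 ≤ z.im ∧ z.im ≤ β})
    (hdiff : ∀ z : ℂ, 0 < z.im → z.im < β → DifferentiableAt ℂ G z)
    (hzero : ∀ z : ℂ, z.im = β → G z = 0) (c : ℂ) (hc : β / 2 < c.im) (hc' : c.im < β) :
    G c = 0 := by
  obtain ⟨h, hh⟩ : ∃ h, h = β - c.im := ⟨_, rfl⟩
  have hpos : 0 < h := by linarith
  set U : Set ℂ := Ioo (-h) h ×ℂ Ioo (-h) h with hU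
  have hUo : IsOpen U := isOpen_Ioo.reProdIm isOpen_Ioo
  have hcl : closure U = Icc (-h) h ×ℂ Icc (-h) h := by
    rw [hU, closure_reProdIm, closure_Ioo (by linarith)]
  have hUb : Bornology.IsBounded U := Metric.isBounded_Ioo _ _ |>.reProdIm (Metric.isBounded_Ioo _ _)
  -- each rotate maps the closed square into the closed strip, and the open square into the open one
  have key : ∀ a : ℂ, (a = 1 ∨ a = I ∨ a = -1 ∨ a = -I) →
      DiffContOnCl ℂ (fun w ↦ G (c + a * w)) U := by
    intro a ha
    constructor
    · intro w hw
      have hw1 : w.re ∈ Ioo (-h) h := hw.1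
      have hw2 : w.im ∈ Ioo (-h) h := hw.2
      have := hw1.1; have := hw1.2; have := hw2.1; have := hw2.2
      have hd : DifferentiableAt ℂ G (c + a * w) := by
        apply hdiff <;> rcases ha with rfl | rfl | rfl | rfl <;> simp <;> linarith
      exact (DifferentiableAt.comp w hd (by fun_prop)).differentiableWithinAt
    · refine hcont.comp (by fun_prop) ?_
      intro w hw
      rw [hcl] at hw
      have hw1 : w.re ∈ Icc (-h) h := hw.1
      have hw2 : w.im ∈ Icc (-h) h := hw.2
      have := hw1.1; have := hw1.2; have := hw2.1; have := hw2.2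
      constructor <;> rcases ha with rfl | rfl | rfl | rfl <;> simp <;> linarith
  have hH : DiffContOnCl ℂ (fun w ↦ ((G (c + 1 * w) * G (c + I * w)) * G (c + -1 * w)) *
      G (c + -I * w)) U :=
    (((key 1 (by simp)).smul (key I (by simp))).smul (key (-1) (by simp))).smul (key (-I) (by simp))
  have hfr : EqOn (fun w ↦ ((G (c + 1 * w) * G (c + I * w)) * G (c + -1 * w)) *
      G (c + -I * w)) (fun _ ↦ 0) (frontier U) := by
    intro w hw
    rw [hUo.frontier_eq, hcl] at hw
    obtain ⟨⟨hw1, hw2⟩, hw3⟩ := hw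
    have hw1 : w.re ∈ Icc (-h) h := hw1
    have hw2 : w.im ∈ Icc (-h) h := hw2
    have hw3 : ¬ (w.re ∈ Ioo (-h) h ∧ w.im ∈ Ioo (-h) h) := hw3
    have : w.im = h ∨ w.re = h ∨ w.im = -h ∨ w.re = -h := by grind
    rcases this with e | e | e | e
    · simp only [hzero (c + 1 * w) (by simp; linarith), zero_mul]
    · simp only [hzero (c + I * w) (by simp; linarith), mul_zero, zero_mul]
    · simp only [hzero (c + -1 * w) (by simp; linarith), mul_zero, zero_mul]
    · simp only [hzero (c + -I * w) (by simp; linarith), mul_zero]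
  have h0 := eqOn_of_eqOn_frontier hUb hH diffContOnCl_const hfr
    (show (0 : ℂ) ∈ U by constructor <;> simp [hpos])
  simpa using h0

/-- Schwarz-reflection argument from Lemma 4.4.14 / Theorem 4.5.8 of the
paper.  Let `β > 0` and let `G : ℂ → ℂ` be continuous on the closed strip
`{z : 0 ≤ Im z ≤ β}` and holomorphic at every point of the open strip `{z : 0 < Im z < β}`.
If `G(t + iβ) = 0` for all real `t`, then `G` vanishes identically on the closed strip. -/
theorem stmt_11 (β : ℝ) (hβ : 0 < β) (G : ℂ → ℂ)
    (hcont : ContinuousOn G {z : ℂ | 0 ≤ z.im ∧ z.im ≤ β})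
    (hdiff : ∀ z : ℂ, 0 < z.im → z.im < β → DifferentiableAt ℂ G z)
    (hzero : ∀ t : ℝ, G (t + β * Complex.I) = 0) :
    ∀ z : ℂ, 0 ≤ z.im → z.im ≤ β → G z = 0 := by
  have hzero' : ∀ z : ℂ, z.im = β → G z = 0 := by
    intro z hz
    have := hzero z.re
    rwa [← hz, Complex.re_add_im] at this
  have hup := eq_zero_of_upper_half β G hcont hdiff hzero'
  set S : Set ℂ := Complex.im ⁻¹' Set.Ioo 0 β with hS
  have hSo : IsOpen S := isOpen_Ioo.preimage Complex.continuous_im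
  have hSc : IsPreconnected S :=
    ((convex_Ioo (0 : ℝ) β).linear_preimage Complex.imLm).isPreconnected
  have hGd : DifferentiableOn ℂ G S := fun z hz ↦
    (hdiff z hz.1 hz.2).differentiableWithinAt
  -- the base point at height `3β/4` has a neighbourhood inside the upper half of the strip
  have hp : (⟨0, 3 * β / 4⟩ : ℂ) ∈ S := by
    constructor <;> simp <;> linarith
  have hev : G =ᶠ[nhds (⟨0, 3 * β / 4⟩ : ℂ)] 0 := by
    have hV : Complex.im ⁻¹' Set.Ioo (β / 2) β ∈ nhds (⟨0, 3 * β / 4⟩ : ℂ) := by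
      refine (isOpen_Ioo.preimage Complex.continuous_im).mem_nhds ?_
      constructor <;> simp <;> linarith
    filter_upwards [hV] with z hz using hup z hz.1 hz.2
  have hS0 : Set.EqOn G 0 S :=
    (hGd.analyticOnNhd hSo).eqOn_zero_of_preconnected_of_eventuallyEq_zero hSc hp hev
  have hclos : closure S = {z : ℂ | 0 ≤ z.im ∧ z.im ≤ β} := by
    rw [hS, Complex.closure_preimage_im, closure_Ioo hβ.ne]
    rfl
  intro z h0 h1
  exact hS0.of_subset_closure hcont continuousOn_const
    (by rw [← hclos]; exact subset_closure) hclos.ge ⟨h0, h1⟩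
end
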